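/- arXiv:2112.03582 — 2 statements merged into one kernel-verified Lean document; each statement's English description precedes it below -/
import Mathlib

section
/- Conditional relative entropy is convex linear. Precisely: let (X, p) be a finite probability space, and for each x ∈ X let ♠^x be a 2-morphism datum with finite sets U_x, V_x, U'_x, V'_x, probability distribution q^x on U_x, channel f_x : U_x ⇝ V_x, functions μ^x : U_x → U'_x and ν^x : V_x → V'_x, channel f'_x : U'_x ⇝ V'_x, and stochastic section t^x : V'_x ⇝ V_x of ν^x, satisfying ν^x∘f_x = f'_x∘μ^x. Form the convex combination ⊕_{x∈X} p_x ♠^x on the disjoint unions ∐_x U_x, ∐_x V_x, ∐_x U'_x, ∐_x V'_x, with distribution (x,u) ↦ p_x q^x_u, channel ⊕_x f_x (equal to f_x on the x-th components and 0 between different components), functions ⊕_x μ^x and ⊕_x ν^x acting componentwise, and section ⊕_x t^x. Then CE( ⊕_{x∈X} p_x ♠^x ) = ∑_{x∈X} p_x CE(♠^x), as an identity in [0,∞]. -/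
open scoped ENNReal BigOperators

/-- A probability distribution on a finite set `X`. -/
def IsDist {X : Type*} [Fintype X] (p : X → ℝ) : Prop :=
  (∀ x, 0 ≤ p x) ∧ ∑ x, p x = 1

/-- A channel from `X` to `Y`; `f y x` is the probability of output `y` given input `x`. -/
def IsChannel {X Y : Type*} [Fintype Y] (f : Y → X → ℝ) : Prop :=
  (∀ y x, 0 ≤ f y x) ∧ ∀ x, ∑ y, f y x = 1

/-- Composite of channels: `(g ∘ f) z x = ∑ y, g z y * f y x`. -/
noncomputable def chComp {X Y Z : Type*} [Fintype Y]
    (g : Z → Y → ℝ) (f : Y → X → ℝ) : Z → X → ℝ :=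
  fun z x => ∑ y, g z y * f y x

/-- The pure (deterministic) channel associated to a function. -/
def pureCh {X Y : Type*} [DecidableEq Y] (φ : X → Y) : Y → X → ℝ :=
  fun y x => if y = φ x then 1 else 0

/-- Pushforward of a distribution along a channel. -/
noncomputable def push {X Y : Type*} [Fintype X] (f : Y → X → ℝ) (p : X → ℝ) : Y → ℝ :=
  fun y => ∑ x, f y x * p x

/-- The identity channel. -/
def idChan {X : Type*} [DecidableEq X] : X → X → ℝ :=
  fun x x' => if x = x' then 1 else 0

/-- `s : Y ⇝ X` is a stochastic section of `φ : X → Y` if it is a channel and `φ ∘ s = id_Y`. -/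
def IsSection {X Y : Type*} [Fintype X] [Fintype Y] [DecidableEq Y]
    (φ : X → Y) (s : X → Y → ℝ) : Prop :=
  IsChannel s ∧ chComp (pureCh φ) s = idChan

open scoped Classical in
/-- Relative entropy `D(p,q) ∈ [0,∞]`, with the conventions `0·log(0/q) = 0` and
`p·log(p/0) = ∞` for `p ≠ 0`. -/
noncomputable def relEnt {X : Type*} [Fintype X] (p q : X → ℝ) : ℝ≥0∞ :=
  if ∀ x, p x ≠ 0 → q x ≠ 0 then
    ENNReal.ofReal (∑ x, if p x = 0 then 0 else p x * Real.log (p x / q x))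
  else ⊤

/-- The direct sum of a family of channels `f x : A x ⇝ B x` over disjoint unions,
equal to `f x` on the `x`-th components and `0` between different components. -/
def dSum {X : Type*} [DecidableEq X] {A B : X → Type*}
    (f : ∀ x, B x → A x → ℝ) : (Σ x, B x) → (Σ x, A x) → ℝ :=
  fun b a => if h : a.1 = b.1 then f b.1 b.2 (h ▸ a.2) else 0

theorem dSum_same {X : Type*} [DecidableEq X] {A B : X → Type*}
    (f : ∀ x, B x → A x → ℝ) (x : X) (b : B x) (a : A x) :
    dSum f ⟨x, b⟩ ⟨x, a⟩ = f x b a := by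
  simp [dSum]

theorem dSum_ne {X : Type*} [DecidableEq X] {A B : X → Type*}
    (f : ∀ x, B x → A x → ℝ) {x y : X} (h : x ≠ y) (b : B y) (a : A x) :
    dSum f ⟨y, b⟩ ⟨x, a⟩ = 0 := by
  simp [dSum, h]

theorem chComp_pureCh_apply {X Y Z : Type*} [Fintype Y] [DecidableEq Y]
    (g : Z → Y → ℝ) (φ : X → Y) (z : Z) (x : X) :
    chComp g (pureCh φ) z x = g z (φ x) := by
  simp [chComp, pureCh]

theorem chComp_dSum {X : Type*} [Fintype X] [DecidableEq X] {A B C : X → Type*}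
    [∀ x, Fintype (B x)] (g : ∀ x, C x → B x → ℝ) (f : ∀ x, B x → A x → ℝ) :
    chComp (dSum g) (dSum f) = dSum (fun x => chComp (g x) (f x)) := by
  funext ⟨z, c⟩ ⟨x, a⟩
  simp only [chComp, Fintype.sum_sigma]
  rw [Finset.sum_eq_single x]
  · by_cases h : x = z
    · subst h
      simp [dSum_same, chComp]
    · simp [dSum_ne _ h]
  · intro y _ hy
    simp [dSum_ne f hy.symm]
  · simp

theorem relEnt_dSum {X : Type*} [Fintype X] [DecidableEq X] {A B : X → Type*}
    [∀ x, Fintype (B x)] (f g : ∀ x, B x → A x → ℝ) (x : X) (a : A x) :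
    relEnt (fun b => dSum f b ⟨x, a⟩) (fun b => dSum g b ⟨x, a⟩)
      = relEnt (fun b => f x b a) (fun b => g x b a) := by
  have h1 : (∀ b : Σ x, B x, dSum f b ⟨x, a⟩ ≠ 0 → dSum g b ⟨x, a⟩ ≠ 0) ↔
      ∀ b, f x b a ≠ 0 → g x b a ≠ 0 := by
    constructor
    · intro h b
      simpa [dSum_same] using h ⟨x, b⟩
    · rintro h ⟨y, b⟩
      by_cases hy : x = y
      · subst hy
        simpa [dSum_same] using h b
      · simp [dSum_ne _ hy]
  unfold relEnt
  simp only [h1, Fintype.sum_sigma]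
  rw [Finset.sum_eq_single x]
  · simp only [dSum_same]
  · intro y _ hy
    simp [dSum_ne f hy.symm]
  · simp

/-- Conditional relative entropy is convex linear. -/
theorem condRelEnt_convex_linear {X : Type*} [Fintype X] [DecidableEq X]
    {U V U' V' : X → Type*}
    [∀ x, Fintype (U x)] [∀ x, Fintype (V x)]
    [∀ x, Fintype (U' x)] [∀ x, Fintype (V' x)]
    [∀ x, DecidableEq (U' x)] [∀ x, DecidableEq (V' x)]
    (p : X → ℝ) (q : ∀ x, U x → ℝ)
    (f : ∀ x, V x → U x → ℝ) (f' : ∀ x, V' x → U' x → ℝ)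
    (μ : ∀ x, U x → U' x) (ν : ∀ x, V x → V' x)
    (t : ∀ x, V x → V' x → ℝ)
    (hp : IsDist p) (hq : ∀ x, IsDist (q x))
    (hf : ∀ x, IsChannel (f x)) (hf' : ∀ x, IsChannel (f' x))
    (ht : ∀ x, IsSection (ν x) (t x))
    (hcomm : ∀ x, chComp (pureCh (ν x)) (f x) = chComp (f' x) (pureCh (μ x))) :
    (∑ u : Σ x, U x, ENNReal.ofReal (p u.1 * q u.1 u.2) *
        relEnt (fun v : Σ x, V x => dSum f v u)
          (fun v : Σ x, V x =>
            chComp (dSum t)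
              (chComp (dSum f')
                (pureCh (fun u : Σ x, U x => (⟨u.1, μ u.1 u.2⟩ : Σ x, U' x)))) v u))
      = ∑ x, ENNReal.ofReal (p x) *
          ∑ u, ENNReal.ofReal (q x u) *
            relEnt (fun v => f x v u)
              (fun v => chComp (t x) (chComp (f' x) (pureCh (μ x))) v u) := by
  rw [Fintype.sum_sigma]
  refine Finset.sum_congr rfl fun x _ => ?_
  rw [Finset.mul_sum]
  refine Finset.sum_congr rfl fun u _ => ?_
  rw [ENNReal.ofReal_mul (hp.1 x), mul_assoc]
  congr 2
  rw [← relEnt_dSum f (fun x => chComp (t x) (chComp (f' x) (pureCh (μ x)))) x u]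
  congr 1
  funext ⟨y, v⟩
  rw [← chComp_dSum]
  simp only [chComp]
  refine Finset.sum_congr rfl fun w _ => ?_
  congr 1
  rw [← chComp_dSum]
  simp only [chComp]
  refine Finset.sum_congr rfl fun w' _ => ?_
  congr 1
  obtain ⟨z, w'⟩ := w'
  by_cases h : x = z
  · subst h
    simp [dSum_same, pureCh]
  · have h' : ¬ z = x := fun e => h e.symm
    simp [dSum_ne _ h, pureCh, h']
end

section
/- 2-relative entropy is functorial with respect to vertical composition. Precisely: let X, Y, X', Y', X'', Y'' be finite sets; p a probability distribution on X; f : X ⇝ Y, f' : X' ⇝ Y', f'' : X'' ⇝ Y'' channels; μ : X → X', μ' : X' → X'', ν : Y → Y', ν' : Y' → Y'' functions; s : X' ⇝ X a stochastic section of μ, s' : X'' ⇝ X' a stochastic section of μ', t : Y' ⇝ Y a stochastic section of ν, t' : Y'' ⇝ Y' a stochastic section of ν'; with ν∘f = f'∘μ and ν'∘f' = f''∘μ' as channels. Let p' = μ∘p. Define RE_2(♠) = D(p, s∘μ∘p) + ∑_{x∈X} p_x D(f^x, (t∘f'∘μ)^x), RE_2(♣) = D(p', s'∘μ'∘p') +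 ∑_{x'∈X'} p'_{x'} D(f'^{x'}, (t'∘f''∘μ')^{x'}), and RE_2(♣∘♠) = D(p, (s∘s')∘(μ'∘μ)∘p) + ∑_{x∈X} p_x D(f^x, ((t∘t')∘f''∘(μ'∘μ))^x). Then RE_2(♣∘♠) = RE_2(♠) + RE_2(♣), as an identity in [0,∞]. -/
open scoped ENNReal BigOperators

lemma push_pureCh {X Y : Type*} [Fintype X] [DecidableEq Y] (φ : X → Y) (p : X → ℝ) (y : Y) :
    push (pureCh φ) p y = ∑ x, if y = φ x then p x else 0 := by
  simp [push, pureCh]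

lemma chComp_pureCh {X Y Z : Type*} [Fintype Y] [DecidableEq Y] (f : Z → Y → ℝ) (φ : X → Y)
    (z : Z) (x : X) : chComp f (pureCh φ) z x = f z (φ x) := by
  simp [chComp, pureCh]

lemma push_chComp {X Y Z : Type*} [Fintype X] [Fintype Y] (g : Z → Y → ℝ) (f : Y → X → ℝ)
    (p : X → ℝ) : push (chComp g f) p = push g (push f p) := by
  funext z
  simp only [push, chComp, Finset.sum_mul, Finset.mul_sum]
  rw [Finset.sum_comm]
  simp only [mul_assoc]

lemma push_comp {X Y Z : Type*} [Fintype X] [Fintype Y] [DecidableEq Y] [DecidableEq Z]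
    (μ : X → Y) (μ' : Y → Z) (p : X → ℝ) :
    push (pureCh (μ' ∘ μ)) p = push (pureCh μ') (push (pureCh μ) p) := by
  rw [← push_chComp]
  congr 1
  funext z x
  rw [chComp_pureCh]
  rfl

lemma isDist_push {X Y : Type*} [Fintype X] [Fintype Y] {f : Y → X → ℝ} {p : X → ℝ}
    (hf : IsChannel f) (hp : IsDist p) : IsDist (push f p) := by
  refine ⟨fun y => Finset.sum_nonneg fun x _ => mul_nonneg (hf.1 y x) (hp.1 x), ?_⟩
  simp only [push]
  rw [Finset.sum_comm]
  simp only [← Finset.sum_mul, hf.2, one_mul, hp.2]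

lemma isChannel_pureCh {X Y : Type*} [Fintype Y] [DecidableEq Y] (φ : X → Y) :
    IsChannel (pureCh φ) := by
  refine ⟨fun y x => ?_, fun x => ?_⟩
  · unfold pureCh; split_ifs <;> norm_num
  · simp [pureCh]

lemma section_zero {X Y : Type*} [Fintype X] [Fintype Y] [DecidableEq Y]
    {φ : X → Y} {s : X → Y → ℝ} (hs : IsSection φ s) {x : X} {y : Y} (h : y ≠ φ x) :
    s x y = 0 := by
  have h1 := congrFun (congrFun hs.2 (φ x)) y
  simp only [chComp, pureCh, idChan, if_neg (Ne.symm h)] at h1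
  rw [Finset.sum_eq_zero_iff_of_nonneg] at h1
  · simpa using h1 x (Finset.mem_univ _)
  · intro i _
    have := hs.1.1 i y
    split_ifs <;> simp [this]

lemma push_section {X Y : Type*} [Fintype X] [Fintype Y] [DecidableEq Y]
    {φ : X → Y} {s : X → Y → ℝ} (hs : IsSection φ s) (q : Y → ℝ) (x : X) :
    push s q x = s x (φ x) * q (φ x) := by
  unfold push
  apply Finset.sum_eq_single_of_mem _ (Finset.mem_univ _)
  intro b _ hb
  rw [section_zero hs hb, zero_mul]

open scoped Classical in
lemma gibbs {X : Type*} [Fintype X] {p q : X → ℝ} (hp : IsDist p) (hq : IsDist q)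
    (h : ∀ x, p x ≠ 0 → q x ≠ 0) :
    0 ≤ ∑ x, if p x = 0 then 0 else p x * Real.log (p x / q x) := by
  have h0 : ∑ x, (p x - q x) = 0 := by
    rw [Finset.sum_sub_distrib, hp.2, hq.2, sub_self]
  refine h0.symm.le.trans ?_
  apply Finset.sum_le_sum
  intro x _
  split_ifs with hx
  · have := hq.1 x
    linarith
  · have hpx : 0 < p x := lt_of_le_of_ne (hp.1 x) (Ne.symm hx)
    have hqx : 0 < q x := lt_of_le_of_ne (hq.1 x) (Ne.symm (h x hx))
    have h1 := Real.one_sub_inv_le_log_of_pos (div_pos hpx hqx)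
    have h2 := mul_le_mul_of_nonneg_left h1 hpx.le
    refine le_trans (le_of_eq ?_) h2
    field_simp

lemma push_pure_ne {X Y : Type*} [Fintype X] [DecidableEq Y] {φ : X → Y} {p : X → ℝ}
    (hp : ∀ x, 0 ≤ p x) {x : X} (hx : p x ≠ 0) : push (pureCh φ) p (φ x) ≠ 0 := by
  rw [push_pureCh]
  intro h
  rw [Finset.sum_eq_zero_iff_of_nonneg] at h
  · exact hx (by simpa using h x (Finset.mem_univ _))
  · intro i _
    have := hp i
    split_ifs <;> simp [this]

lemma push_pure_exists {X Y : Type*} [Fintype X] [DecidableEq Y] {φ : X → Y} {p : X → ℝ}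
    {y : Y} (hy : push (pureCh φ) p y ≠ 0) : ∃ x, p x ≠ 0 ∧ φ x = y := by
  rw [push_pureCh] at hy
  obtain ⟨x, _, hx⟩ := Finset.exists_ne_zero_of_sum_ne_zero hy
  by_cases h : y = φ x
  · rw [if_pos h] at hx
    exact ⟨x, hx, h.symm⟩
  · simp [h] at hx

lemma sum_push_pure {X Y : Type*} [Fintype X] [Fintype Y] [DecidableEq Y] (φ : X → Y) (p : X → ℝ)
    (g : Y → ℝ) : ∑ y, push (pureCh φ) p y * g y = ∑ x, p x * g (φ x) := by
  simp only [push_pureCh, Finset.sum_mul]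
  rw [Finset.sum_comm]
  simp

lemma sum_push_pure_ennreal {X Y : Type*} [Fintype X] [Fintype Y] [DecidableEq Y] (φ : X → Y)
    {p : X → ℝ} (hp : ∀ x, 0 ≤ p x) (g : Y → ℝ≥0∞) :
    ∑ y, ENNReal.ofReal (push (pureCh φ) p y) * g y = ∑ x, ENNReal.ofReal (p x) * g (φ x) := by
  have h : ∀ y, ENNReal.ofReal (push (pureCh φ) p y)
      = ∑ x, if y = φ x then ENNReal.ofReal (p x) else 0 := by
    intro y
    rw [push_pureCh, ENNReal.ofReal_sum_of_nonneg]
    · refine Finset.sum_congr rfl fun x _ => ?_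
      split_ifs <;> simp
    · intro i _
      have := hp i
      split_ifs <;> simp [this]
  simp only [h, Finset.sum_mul]
  rw [Finset.sum_comm]
  simp

lemma relEnt_chain {X Y : Type*} [Fintype X] [Fintype Y] [DecidableEq Y]
    {φ : X → Y} {s : X → Y → ℝ} (hs : IsSection φ s) {p : X → ℝ} (hp : IsDist p)
    {q : Y → ℝ} (hq : IsDist q) :
    relEnt p (push s q) = relEnt p (push s (push (pureCh φ) p)) + relEnt (push (pureCh φ) p) q := by
  classical
  have hp' := isDist_push (isChannel_pureCh φ) hp
  by_cases h1 : ∀ x, p x ≠ 0 → push s (push (pureCh φ) p) x ≠ 0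
  swap
  · have h3 : ¬ ∀ x, p x ≠ 0 → push s q x ≠ 0 := by
      intro h
      apply h1
      intro x hx
      have := h x hx
      rw [push_section hs] at this ⊢
      exact mul_ne_zero (left_ne_zero_of_mul this) (push_pure_ne hp.1 hx)
    simp only [relEnt, if_neg h1, if_neg h3, top_add]
  by_cases h2 : ∀ y, push (pureCh φ) p y ≠ 0 → q y ≠ 0
  swap
  · have h3 : ¬ ∀ x, p x ≠ 0 → push s q x ≠ 0 := by
      intro h
      apply h2
      intro y hy
      obtain ⟨x, hx, rfl⟩ := push_pure_exists hy
      have := h x hx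
      rw [push_section hs] at this
      exact right_ne_zero_of_mul this
    simp only [relEnt, if_neg h2, if_neg h3, add_top]
  have h3 : ∀ x, p x ≠ 0 → push s q x ≠ 0 := by
    intro x hx
    have ha := h1 x hx
    rw [push_section hs] at ha ⊢
    exact mul_ne_zero (left_ne_zero_of_mul ha) (h2 _ (push_pure_ne hp.1 hx))
  have g1 := gibbs hp (isDist_push hs.1 hp') h1
  have g2 := gibbs hp' hq h2
  simp only [relEnt, if_pos h1, if_pos h2, if_pos h3]
  rw [← ENNReal.ofReal_add g1 g2]
  congr 1
  have e : ∑ y, (if push (pureCh φ) p y = 0 then 0 else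
      push (pureCh φ) p y * Real.log (push (pureCh φ) p y / q y))
      = ∑ x, p x * Real.log (push (pureCh φ) p (φ x) / q (φ x)) := by
    rw [← sum_push_pure φ p (fun y => Real.log (push (pureCh φ) p y / q y))]
    refine Finset.sum_congr rfl fun y _ => ?_
    split_ifs with h
    · rw [h, zero_mul]
    · rfl
  rw [e, ← Finset.sum_add_distrib]
  refine Finset.sum_congr rfl fun x _ => ?_
  split_ifs with hx
  · rw [hx]; simp
  · have ha := h1 x hx
    have hb := push_pure_ne (φ := φ) hp.1 hx
    have hc := h2 _ hb
    rw [push_section hs] at ha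
    have hd := left_ne_zero_of_mul ha
    rw [push_section hs, push_section hs, ← mul_add, ← Real.log_mul]
    · congr 2
      field_simp
    · exact div_ne_zero hx ha
    · exact div_ne_zero hb hc

/-- 2-relative entropy is functorial with respect to vertical composition. -/
theorem relEnt2_vertical_comp {X Y X' Y' X'' Y'' : Type*}
    [Fintype X] [Fintype Y] [Fintype X'] [Fintype Y'] [Fintype X''] [Fintype Y'']
    [DecidableEq X'] [DecidableEq Y'] [DecidableEq X''] [DecidableEq Y'']
    (p : X → ℝ) (f : Y → X → ℝ) (f' : Y' → X' → ℝ) (f'' : Y'' → X'' → ℝ)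
    (μ : X → X') (μ' : X' → X'') (ν : Y → Y') (ν' : Y' → Y'')
    (s : X → X' → ℝ) (s' : X' → X'' → ℝ) (t : Y → Y' → ℝ) (t' : Y' → Y'' → ℝ)
    (hp : IsDist p) (hf : IsChannel f) (hf' : IsChannel f') (hf'' : IsChannel f'')
    (hs : IsSection μ s) (hs' : IsSection μ' s')
    (ht : IsSection ν t) (ht' : IsSection ν' t')
    (hcomm : chComp (pureCh ν) f = chComp f' (pureCh μ))
    (hcomm' : chComp (pureCh ν') f' = chComp f'' (pureCh μ')) :
    (relEnt p (push (chComp s s') (push (pureCh (μ' ∘ μ)) p))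
      + ∑ x, ENNReal.ofReal (p x) *
          relEnt (fun y => f y x)
            (fun y => chComp (chComp t t') (chComp f'' (pureCh (μ' ∘ μ))) y x))
      = (relEnt p (push s (push (pureCh μ) p))
          + ∑ x, ENNReal.ofReal (p x) *
              relEnt (fun y => f y x)
                (fun y => chComp t (chComp f' (pureCh μ)) y x))
        + (relEnt (push (pureCh μ) p)
              (push s' (push (pureCh μ') (push (pureCh μ) p)))
            + ∑ x', ENNReal.ofReal (push (pureCh μ) p x') *
                relEnt (fun y' => f' y' x')
                  (fun y' => chComp t' (chComp f'' (pureCh μ')) y' x')) := by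
  have hp' := isDist_push (isChannel_pureCh μ) hp
  rw [push_chComp, push_comp, relEnt_chain hs hp
    (isDist_push hs'.1 (isDist_push (isChannel_pureCh μ') hp')),
    sum_push_pure_ennreal μ hp.1]
  have key : ∀ x, relEnt (fun y => f y x)
      (fun y => chComp (chComp t t') (chComp f'' (pureCh (μ' ∘ μ))) y x)
      = relEnt (fun y => f y x) (fun y => chComp t (chComp f' (pureCh μ)) y x)
        + relEnt (fun y' => f' y' (μ x))
            (fun y' => chComp t' (chComp f'' (pureCh μ')) y' (μ x)) := by
    intro x
    have e1 : push (pureCh ν) (fun y => f y x) = fun y' => f' y' (μ x) := by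
      funext y'
      have := congrFun (congrFun hcomm y') x
      rw [chComp_pureCh] at this
      exact this
    have e2 : (fun y => chComp (chComp t t') (chComp f'' (pureCh (μ' ∘ μ))) y x)
        = push t (push t' (fun y => f'' y (μ' (μ x)))) := by
      rw [← push_chComp]
      funext y
      simp only [chComp, push, pureCh]
      simp
    have e3 : (fun y => chComp t (chComp f' (pureCh μ)) y x)
        = push t (fun y' => f' y' (μ x)) := by
      funext y
      simp only [chComp, push, pureCh]
      simp
    have e4 : (fun y' => chComp t' (chComp f'' (pureCh μ')) y' (μ x))
        = push t' (fun y => f'' y (μ' (μ x))) := by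
      funext y
      simp only [chComp, push, pureCh]
      simp
    have d1 : IsDist (fun y => f y x) := ⟨fun y => hf.1 y x, hf.2 x⟩
    have d2 : IsDist (fun y => f'' y (μ' (μ x))) := ⟨fun y => hf''.1 y _, hf''.2 _⟩
    rw [e2, e3, e4, ← e1]
    exact relEnt_chain ht d1 (isDist_push ht'.1 d2)
  simp only [key, mul_add, Finset.sum_add_distrib]
  ring
end
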